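/- Let k ≥ 2 and r ≥ 1 be fixed integers and let n ≥ 3000·(r+1)³·(k+r)·k². If F ⊆ C([n],k) has |F| = Σ_{i=1}^{r} C(n−i, k−1) and satisfies I(F) = MI(F), then F is, up to a permutation of [n], equal to L_{n,k,1}^{(r)}. -/

import Mathlib

open Finset

/-- The total intersection of a family: `I(F) = ∑_{A∈F} ∑_{B∈F} |A ∩ B|`. -/
def totalInt (F : Finset (Finset ℕ)) : ℕ :=
  ∑ A ∈ F, ∑ B ∈ F, (A ∩ B).card

/-- The degree of a set `S` in the family `F`: the number of members of `F` containing `S`. -/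
def degF (F : Finset (Finset ℕ)) (S : Finset ℕ) : ℕ :=
  (F.filter fun A => S ⊆ A).card

/-- `A` strictly precedes `B` in the lexicographic order on finite sets of positive integers:
the minimal element of the symmetric difference `A Δ B` belongs to `A`. -/
def lexLt (A B : Finset ℕ) : Prop :=
  ∃ m ∈ A \ B, ∀ x ∈ (A \ B) ∪ (B \ A), m ≤ x

/-- `S` is an initial segment (prefix) of the `k`-element subsets of `[n] = {1,…,n}`
under the lexicographic order. -/
def IsLexPrefix (n k : ℕ) (S : Finset (Finset ℕ)) : Prop :=
  S ⊆ (Icc 1 n).powersetCard k ∧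
    ∀ A ∈ S, ∀ B ∈ (Icc 1 n).powersetCard k, lexLt B A → B ∈ S

/-- The cardinality of the family `L_{n,k,t}^{(r)}`:
`C(n−t+1, k−t+1) − C(n−(t+r−1), k−t+1)`. -/
def lexStarCard (n k t r : ℕ) : ℕ :=
  (n - t + 1).choose (k - t + 1) - (n - (t + r - 1)).choose (k - t + 1)

/-- The full `t`-star with core `Y`: all `k`-subsets of `[n]` containing `Y`. -/
def fullStar (n k : ℕ) (Y : Finset ℕ) : Finset (Finset ℕ) :=
  ((Icc 1 n).powersetCard k).filter fun A => Y ⊆ A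

/-- The constant `C_s = 2^{2^{s−1}−1} · 10^{2^{s+2}−2} · (k² t⁴ (r+1)⁷)^{2^{s−1}}`. -/
def Cconst (k t r s : ℕ) : ℕ :=
  2 ^ (2 ^ (s - 1) - 1) * 10 ^ (2 ^ (s + 2) - 2) * (k ^ 2 * t ^ 4 * (r + 1) ^ 7) ^ (2 ^ (s - 1))

def dg (S : Finset (Finset ℕ)) (x : ℕ) : ℕ := (S.filter fun A => x ∈ A).card

def LTs (n k : ℕ) (T : Finset ℕ) : Finset (Finset ℕ) :=
  ((Icc 1 n).powersetCard k).filter fun A => ¬ Disjoint A T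

lemma sum_dg_mul (S : Finset (Finset ℕ)) (H : Finset ℕ) (w : ℕ → ℕ) :
    ∑ x ∈ H, dg S x * w x = ∑ A ∈ S, ∑ x ∈ H with x ∈ A, w x := by
  simp only [dg, card_filter, sum_filter, sum_mul]
  rw [sum_comm]
  refine sum_congr rfl fun A _ => sum_congr rfl fun x _ => ?_
  split_ifs <;> simp

lemma sum_dg (S : Finset (Finset ℕ)) (H : Finset ℕ) :
    ∑ x ∈ H, dg S x = ∑ A ∈ S, (A ∩ H).card := by
  have := sum_dg_mul S H (fun _ => 1)
  simp only [mul_one, sum_const, smul_eq_mul] at this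
  rw [this]
  refine sum_congr rfl fun A _ => ?_
  congr 1; ext x; simp [and_comm]

lemma totalInt_eq (n k : ℕ) (F : Finset (Finset ℕ)) (hF : F ⊆ (Icc 1 n).powersetCard k) :
    totalInt F = ∑ x ∈ Icc 1 n, dg F x ^ 2 := by
  simp only [pow_two]
  rw [sum_dg_mul, totalInt]
  refine sum_congr rfl fun A hA => ?_
  have h1 := (mem_powersetCard.1 (hF hA)).1
  have h2 : (Icc 1 n).filter (fun x => x ∈ A) = A := by
    ext x; simp only [mem_filter]; exact ⟨fun h => h.2, fun h => ⟨h1 h, h⟩⟩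
  rw [h2, sum_dg]
  refine sum_congr rfl fun B _ => ?_
  rw [inter_comm]

lemma card_contain (n k : ℕ) (Y : Finset ℕ) (hY : Y ⊆ Icc 1 n) (hk : Y.card ≤ k) :
    (((Icc 1 n).powersetCard k).filter fun A => Y ⊆ A).card
      = (n - Y.card).choose (k - Y.card) := by
  have : (n - Y.card) = (Icc 1 n \ Y).card := by
    rw [card_sdiff_of_subset hY]; simp
  rw [this, ← card_powersetCard]
  refine card_nbij' (fun A => A \ Y) (fun A => A ∪ Y) ?_ ?_ ?_ ?_
  · intro A hA
    simp only [coe_filter, mem_powersetCard, Set.mem_ofPred_eq, mem_coe] at hA ⊢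
    exact ⟨sdiff_subset_sdiff hA.1.1 le_rfl, by rw [card_sdiff_of_subset hA.2, hA.1.2]⟩
  · intro A hA
    simp only [coe_filter, mem_powersetCard, Set.mem_ofPred_eq, mem_coe] at hA ⊢
    refine ⟨⟨union_subset (hA.1.trans sdiff_subset) hY, ?_⟩, subset_union_right⟩
    rw [card_union_of_disjoint, hA.2]
    · omega
    · exact disjoint_of_subset_left hA.1 sdiff_disjoint
  · intro A hA
    simp only [coe_filter, mem_powersetCard, Set.mem_ofPred_eq, mem_coe] at hA ⊢
    exact sdiff_union_of_subset hA.2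
  · intro A hA
    simp only [coe_filter, mem_powersetCard, Set.mem_ofPred_eq, mem_coe] at hA ⊢
    exact union_sdiff_cancel_right (disjoint_of_subset_left hA.1 sdiff_disjoint)

lemma LTs_card (n k : ℕ) (T : Finset ℕ) (hT : T ⊆ Icc 1 n) :
    (LTs n k T).card = n.choose k - (n - T.card).choose k := by
  have h1 := card_filter_add_card_filter_not (s := (Icc 1 n).powersetCard k)
    (fun A => Disjoint A T)
  have h2 : (((Icc 1 n).powersetCard k).filter fun A => Disjoint A T)
      = (Icc 1 n \ T).powersetCard k := by
    ext A; simp only [mem_filter, mem_powersetCard, subset_sdiff]; tauto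
  rw [h2, card_powersetCard, card_powersetCard, card_sdiff_of_subset hT] at h1
  simp only [Nat.card_Icc, Nat.add_sub_cancel] at h1
  unfold LTs
  omega

lemma sum_choose (n k r : ℕ) (hk : 1 ≤ k) (hr : r ≤ n) :
    ∑ i ∈ Icc 1 r, (n - i).choose (k - 1) + (n - r).choose k = n.choose k := by
  induction r with
  | zero => simp
  | succ r ih =>
    rw [sum_Icc_succ_top (by omega)]
    have := ih (by omega)
    obtain ⟨j, rfl⟩ : ∃ j, k = j + 1 := ⟨k - 1, by omega⟩
    have h : n - r = (n - (r + 1)) + 1 := by omega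
    rw [h, Nat.choose_succ_succ'] at this
    simp only [Nat.add_sub_cancel] at *
    omega

lemma exists_top (n r : ℕ) (hr : r ≤ n) (d : ℕ → ℕ) :
    ∃ T ⊆ Icc 1 n, T.card = r ∧ ∀ x ∈ Icc 1 n \ T, ∀ t ∈ T, d x ≤ d t := by
  induction r with
  | zero => exact ⟨∅, by simp⟩
  | succ r ih =>
    obtain ⟨T, hT, hc, h⟩ := ih (by omega)
    have hne : (Icc 1 n \ T).Nonempty := by
      rw [← card_pos, card_sdiff_of_subset hT]; simp; omega
    obtain ⟨y, hy, hmax⟩ := exists_max_image _ d hne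
    have hy' := mem_sdiff.1 hy
    refine ⟨insert y T, insert_subset hy'.1 hT, by rw [card_insert_of_notMem hy'.2, hc], ?_⟩
    intro x hx t ht
    have hx' : x ∈ Icc 1 n \ T := by
      simp only [mem_sdiff, mem_insert, not_or] at hx ⊢; tauto
    rcases mem_insert.1 ht with rfl | ht
    · exact hmax x hx'
    · exact h x hx' t ht

lemma exists_perm (n r : ℕ) (hr : r ≤ n) (T : Finset ℕ) (hT : T ⊆ Icc 1 n) (hc : T.card = r) :
    ∃ σ : Equiv.Perm ℕ, (∀ x ∈ Icc 1 n, σ x ∈ Icc 1 n) ∧ ∀ x ∈ T, σ x ∈ Icc 1 r := by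
  have hsub : Icc 1 r ⊆ Icc 1 n := Icc_subset_Icc le_rfl hr
  let α : Type := {x // x ∈ Icc 1 n}
  haveI : Fintype α := inferInstanceAs (Fintype {x // x ∈ Icc 1 n})
  classical
  have hcard : Fintype.card {x : α // x.1 ∈ T} = Fintype.card {x : α // x.1 ∈ Icc 1 r} := by
    have key : ∀ U ⊆ Icc 1 n, Fintype.card {x : α // x.1 ∈ U} = U.card := by
      intro U hU
      rw [← Fintype.card_coe U]
      exact Fintype.card_congr
        ⟨fun x => ⟨x.1.1, x.2⟩, fun x => ⟨⟨x.1, hU x.2⟩, x.2⟩, fun x => rfl, fun x => rfl⟩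
    rw [key T hT, key _ hsub, hc]; simp
  let e := Fintype.equivOfCardEq hcard
  let p : Equiv.Perm α := e.extendSubtype
  refine ⟨Equiv.Perm.ofSubtype p, ?_, ?_⟩
  · intro x hx
    rw [Equiv.Perm.ofSubtype_apply_of_mem p hx]
    exact (p ⟨x, hx⟩).2
  · intro x hx
    rw [Equiv.Perm.ofSubtype_apply_of_mem p (hT hx)]
    exact e.extendSubtype_mem ⟨x, hT hx⟩ hx

lemma bonf (n k : ℕ) (hk : 2 ≤ k) (P : Finset (Finset ℕ)) (hP : P ⊆ (Icc 1 n).powersetCard k)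
    (H : Finset ℕ) (hH : H ⊆ Icc 1 n) :
    ∑ x ∈ H, dg P x ≤ P.card + H.card ^ 2 * (n - 2).choose (k - 2) := by
  rw [sum_dg]
  have h1 : ∀ A ∈ P, (A ∩ H).card ≤ 1 + ∑ q ∈ H.offDiag, if {q.1, q.2} ⊆ A then 1 else 0 := by
    intro A _
    have : ((A ∩ H).offDiag).card ≤ ∑ q ∈ H.offDiag, if {q.1, q.2} ⊆ A then 1 else 0 := by
      rw [← card_filter]
      apply card_le_card
      intro q hq
      simp only [mem_offDiag, mem_inter, mem_filter, insert_subset_iff, singleton_subset_iff] at hq ⊢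
      tauto
    rw [offDiag_card] at this
    rcases Nat.lt_or_ge (A ∩ H).card 2 with h | h
    · omega
    · have : 2 * (A ∩ H).card ≤ (A ∩ H).card * (A ∩ H).card := Nat.mul_le_mul_right _ h
      omega
  refine (sum_le_sum h1).trans ?_
  rw [sum_add_distrib, sum_comm]
  simp only [sum_const, smul_eq_mul, mul_one]
  gcongr
  have h2 : ∀ q ∈ H.offDiag, (∑ A ∈ P, if {q.1, q.2} ⊆ A then 1 else 0) ≤ (n - 2).choose (k - 2) := by
    intro q hq
    rw [mem_offDiag] at hq
    rw [← card_filter]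
    have hc : ({q.1, q.2} : Finset ℕ).card = 2 := card_pair hq.2.2
    have := card_contain n k {q.1, q.2} (by
      simp only [insert_subset_iff, singleton_subset_iff]; exact ⟨hH hq.1, hH hq.2.1⟩) (by omega)
    rw [hc] at this
    rw [← this]
    exact card_le_card (filter_subset_filter _ hP)
  refine (sum_le_card_nsmul _ _ _ h2).trans ?_
  rw [smul_eq_mul, offDiag_card, pow_two]
  gcongr
  omega

lemma dg_LTs_out (n k : ℕ) (hk : 2 ≤ k) (T : Finset ℕ) (hT : T ⊆ Icc 1 n) (x : ℕ)
    (hx : x ∈ Icc 1 n \ T) : dg (LTs n k T) x ≤ T.card * (n - 2).choose (k - 2) := by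
  rw [mem_sdiff] at hx
  have : (LTs n k T).filter (fun A => x ∈ A) ⊆
      T.biUnion fun t => ((Icc 1 n).powersetCard k).filter fun A => {t, x} ⊆ A := by
    intro A hA
    simp only [LTs, mem_filter, not_disjoint_iff] at hA
    obtain ⟨⟨h1, t, h2, h3⟩, h4⟩ := hA
    simp only [mem_biUnion, mem_filter, insert_subset_iff, singleton_subset_iff]
    exact ⟨t, h3, h1, h2, h4⟩
  refine (card_le_card this).trans (card_biUnion_le_card_mul _ _ _ ?_)
  intro t ht
  have hc : ({t, x} : Finset ℕ).card = 2 := card_pair (by rintro rfl; exact hx.2 ht)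
  have := card_contain n k {t, x} (by
      simp only [insert_subset_iff, singleton_subset_iff]; exact ⟨hT ht, hx.1⟩) (by omega)
  rw [hc] at this
  exact this.le

lemma dg_full (n k : ℕ) (hk : 1 ≤ k) (t : ℕ) (ht : t ∈ Icc 1 n) :
    dg ((Icc 1 n).powersetCard k) t = (n - 1).choose (k - 1) := by
  have := card_contain n k {t} (by simpa using ht) (by simpa using hk)
  simpa [dg] using this

lemma dg_LTs_in (n k : ℕ) (hk : 1 ≤ k) (T : Finset ℕ) (hT : T ⊆ Icc 1 n) (t : ℕ)
    (ht : t ∈ T) : dg (LTs n k T) t = (n - 1).choose (k - 1) := by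
  rw [← dg_full n k hk t (hT ht), dg, dg, LTs, filter_filter]
  congr 1
  ext A
  simp only [mem_filter, not_disjoint_iff]
  exact ⟨fun h => ⟨h.1, h.2.2⟩, fun h => ⟨h.1, ⟨t, h.2, ht⟩, h.2⟩⟩

/-- degree splits along difference -/
lemma dg_split (F L : Finset (Finset ℕ)) (x : ℕ) :
    dg F x + dg (L \ F) x = dg L x + dg (F \ L) x := by
  have h : ∀ U V : Finset (Finset ℕ), dg U x = dg (U ∩ V) x + dg (U \ V) x := by
    intro U V
    unfold dg
    rw [← card_union_of_disjoint, ← filter_union, union_comm, sdiff_union_inter]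
    exact disjoint_filter_filter (disjoint_sdiff_inter U V).symm
  rw [h F L, h L F, inter_comm L F]; omega

/-- bound on the sum of squares of degrees of the extra sets -/
lemma sq_bound (n k r g : ℕ) (hk : 2 ≤ k) (hr : 1 ≤ r) (P : Finset (Finset ℕ))
    (hP : P ⊆ (Icc 1 n).powersetCard k) (X : Finset ℕ) (hX : X ⊆ Icc 1 n)
    (hg : ∀ x ∈ X, dg P x ≤ g) (D E : ℕ) (hE : E = (n - 2).choose (k - 2))
    (hD : 3000 * (k ^ 2 * r ^ 2) * E ≤ D) (hD0 : 0 < D) (hu : P.card ≤ r * D) :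
    2 * ∑ x ∈ X, dg P x ^ 2
      ≤ 2 * g * P.card + 32 * (k ^ 2 * r ^ 2) * E * P.card + D * P.card := by
  set H := X.filter (fun x => D ≤ 2 * k * dg P x) with hHdef
  have hHX : H ⊆ X := filter_subset _ _
  have hh : H.card ≤ 4 * k * r := by
    by_contra hcon
    obtain ⟨H', hH', hc⟩ := exists_subset_card_eq (not_le.1 hcon).le
    have h1 := bonf n k hk P hP H' (hH'.trans (hHX.trans hX))
    rw [hc, ← hE] at h1
    have h2 : H'.card * D ≤ ∑ x ∈ H', 2 * k * dg P x := by
      rw [← smul_eq_mul]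
      exact card_nsmul_le_sum _ _ _ fun x hx => (mem_filter.1 (hH' hx)).2
    rw [← mul_sum, hc] at h2
    have h3 : 2 * r * D ≤ ∑ x ∈ H', dg P x := by
      have : 2 * k * (2 * r * D) ≤ 2 * k * ∑ x ∈ H', dg P x := by
        calc _ = 4 * k * r * D := by ring
          _ ≤ _ := h2
      exact Nat.le_of_mul_le_mul_left this (by omega)
    have h4 : (4 * k * r) ^ 2 * E = 16 * ((k ^ 2 * r ^ 2) * E) := by ring
    rw [h4] at h1
    have h5 : D ≤ r * D := Nat.le_mul_of_pos_left _ hr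
    have h6 : 2 * r * D = 2 * (r * D) := by ring
    rw [mul_assoc] at hD
    omega
  have hb := bonf n k hk P hP H (hHX.trans hX)
  rw [← hE] at hb
  have hb' : H.card ^ 2 * E ≤ 16 * (k ^ 2 * r ^ 2) * E := by
    calc _ ≤ (4 * k * r) ^ 2 * E := by gcongr
      _ = _ := by ring
  have hsplit := sum_filter_add_sum_filter_not X (fun x => D ≤ 2 * k * dg P x) (fun x => dg P x ^ 2)
  rw [← hHdef] at hsplit
  have hPu : ∀ x, dg P x ≤ P.card := fun x => card_filter_le _ _
  have hA : ∑ x ∈ H, dg P x ^ 2 ≤ g * P.card + P.card * (16 * (k ^ 2 * r ^ 2) * E) := by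
    have : ∑ x ∈ H, dg P x ^ 2 ≤ min g P.card * ∑ x ∈ H, dg P x := by
      rw [mul_sum]
      refine sum_le_sum fun x hx => ?_
      rw [pow_two]
      exact Nat.mul_le_mul_right _ (le_min (hg x (hHX hx)) (hPu x))
    refine this.trans ((Nat.mul_le_mul_left _ (hb.trans (Nat.add_le_add_left hb' _))).trans ?_)
    rw [mul_add]
    gcongr
    · exact min_le_left _ _
    · exact min_le_right _ _
  have hB : 2 * ∑ x ∈ X with ¬ D ≤ 2 * k * dg P x, dg P x ^ 2 ≤ D * P.card := by
    have h1 : ∑ x ∈ X with ¬ D ≤ 2 * k * dg P x, dg P x ≤ P.card * k := by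
      rw [sum_dg, ← smul_eq_mul]
      refine sum_le_card_nsmul _ _ _ fun A hA => ?_
      rw [← (mem_powersetCard.1 (hP hA)).2]
      exact card_le_card inter_subset_left
    have h2 : k * (2 * ∑ x ∈ X with ¬ D ≤ 2 * k * dg P x, dg P x ^ 2) ≤
        D * ∑ x ∈ X with ¬ D ≤ 2 * k * dg P x, dg P x := by
      rw [mul_sum, mul_sum, mul_sum]
      refine sum_le_sum fun x hx => ?_
      have := (mem_filter.1 hx).2
      calc k * (2 * dg P x ^ 2) = (2 * k * dg P x) * dg P x := by ring
        _ ≤ _ := Nat.mul_le_mul_right _ (by omega)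
    have h3 : k * (2 * ∑ x ∈ X with ¬ D ≤ 2 * k * dg P x, dg P x ^ 2) ≤ k * (D * P.card) := by
      calc _ ≤ _ := h2
        _ ≤ D * (P.card * k) := Nat.mul_le_mul_left _ h1
        _ = _ := by ring
    exact Nat.le_of_mul_le_mul_left h3 (by omega)
  rw [← hsplit]
  nlinarith [hA, hB]

lemma key (n k r : ℕ) (hk : 2 ≤ k) (hr : 1 ≤ r) (D E : ℕ)
    (hDd : D = (n - 1).choose (k - 1)) (hE : E = (n - 2).choose (k - 2))
    (hD : 3000 * (k ^ 2 * r ^ 2) * E ≤ D) (hD0 : 0 < D)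
    (F : Finset (Finset ℕ)) (hF : F ⊆ (Icc 1 n).powersetCard k) (hu : F.card ≤ r * D)
    (T : Finset ℕ) (hT : T ⊆ Icc 1 n) (hTc : T.card = r)
    (htop : ∀ x ∈ Icc 1 n \ T, ∀ t ∈ T, dg F x ≤ dg F t)
    (hcard : (LTs n k T).card = F.card) (hopt : totalInt (LTs n k T) ≤ totalInt F) :
    F = LTs n k T := by
  set L := LTs n k T with hL
  have hLs : L ⊆ (Icc 1 n).powersetCard k := filter_subset _ _
  by_contra hne
  set P := F \ L with hPd
  set Q := L \ F with hQd
  have hPF : P ⊆ F := sdiff_subset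
  have hPQ : P.card = Q.card := by
    rw [hPd, hQd]; exact card_sdiff_comm hcard.symm
  have hPpos : 0 < P.card := by
    rw [card_pos, sdiff_nonempty]
    intro h
    exact hne (eq_of_subset_of_card_le h hcard.le)
  obtain ⟨t0, ht0, hmin⟩ := exists_min_image T (dg F) (card_pos.1 (by omega))
  set g := dg F t0 with hgd
  have hmono : ∀ (U V : Finset (Finset ℕ)), U ⊆ V → ∀ x, dg U x ≤ dg V x :=
    fun U V h x => card_le_card (filter_subset_filter _ h)
  have hsq := sq_bound n k r g hk hr P (hPF.trans hF) (Icc 1 n \ T) sdiff_subset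
    (fun x hx => (hmono _ _ hPF x).trans (htop x hx t0 ht0)) D E hE hD hD0
    ((card_le_card hPF).trans hu)
  have hm : P.card ≤ ∑ t ∈ T, dg Q t := by
    rw [sum_dg, hPQ, card_eq_sum_ones]
    refine sum_le_sum fun A hA => ?_
    have := (mem_filter.1 ((mem_sdiff.1 hA).1)).2
    rw [disjoint_iff_inter_eq_empty] at this
    exact card_pos.2 (nonempty_iff_ne_empty.2 this)
  have hTin : ∑ t ∈ T, dg F t ^ 2 + (D + g) * ∑ t ∈ T, dg Q t ≤ ∑ t ∈ T, dg L t ^ 2 := by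
    rw [mul_sum, ← sum_add_distrib]
    refine sum_le_sum fun t ht => ?_
    have h1 := dg_split F L t
    have h2 : dg P t = 0 := by
      rw [dg, card_eq_zero, filter_eq_empty_iff]
      intro A hA htA
      rw [hPd, mem_sdiff] at hA
      exact hA.2 (mem_filter.2 ⟨hF hA.1, not_disjoint_iff.2 ⟨t, htA, ht⟩⟩)
    have h3 : dg L t = D := by rw [hDd]; exact dg_LTs_in n k (by omega) T hT t ht
    have h4 := hmin t ht
    rw [← hPd, ← hQd, h2, h3] at h1
    rw [h3]
    nlinarith [Nat.mul_le_mul_right (dg Q t) h4]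
  have hout : ∑ x ∈ Icc 1 n \ T, dg F x ^ 2 ≤ ∑ x ∈ Icc 1 n \ T, dg L x ^ 2
      + 2 * (r * E) * (P.card * k) + ∑ x ∈ Icc 1 n \ T, dg P x ^ 2 := by
    have h1 : ∑ x ∈ Icc 1 n \ T, dg P x ≤ P.card * k := by
      rw [sum_dg, ← smul_eq_mul]
      refine sum_le_card_nsmul _ _ _ fun A hA => ?_
      rw [← (mem_powersetCard.1 (hF (hPF hA))).2]
      exact card_le_card inter_subset_left
    refine le_trans ?_ (Nat.add_le_add_right (Nat.add_le_add_left (Nat.mul_le_mul_left _ h1) _) _)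
    rw [mul_sum, ← sum_add_distrib, ← sum_add_distrib]
    refine sum_le_sum fun x hx => ?_
    have h1 := dg_split F L x
    rw [← hPd] at h1
    have h3 := dg_LTs_out n k hk T hT x hx
    rw [hTc, ← hE, ← hL] at h3
    have h4 : dg F x ≤ dg L x + dg P x := by omega
    calc dg F x ^ 2 ≤ (dg L x + dg P x) ^ 2 := by gcongr
      _ = dg L x ^ 2 + 2 * dg L x * dg P x + dg P x ^ 2 := by ring
      _ ≤ _ := by gcongr
  rw [totalInt_eq n k F hF, totalInt_eq n k L hLs, ← sum_sdiff hT, ← sum_sdiff hT] at hopt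
  have h5 : (D + g) * P.card ≤ (D + g) * ∑ t ∈ T, dg Q t := Nat.mul_le_mul_left _ hm
  have h6 : (D + g) * P.card ≤ 2 * (r * E) * (P.card * k) + ∑ x ∈ Icc 1 n \ T, dg P x ^ 2 := by
    omega
  have h7 : r * k ≤ k ^ 2 * r ^ 2 := by
    calc r * k ≤ (r * k) ^ 2 := Nat.le_self_pow (by norm_num) _
      _ = _ := by ring
  have h8 : (2 * (D + g)) * P.card ≤
      (2 * g + 36 * (k ^ 2 * r ^ 2 * E) + D) * P.card := by
    have : r * k * (E * P.card) ≤ k ^ 2 * r ^ 2 * (E * P.card) := Nat.mul_le_mul_right _ h7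
    nlinarith
  have h9 := Nat.le_of_mul_le_mul_right h8 hPpos
  rw [mul_assoc] at hD
  omega

lemma LTs_prefix (n k r : ℕ) : IsLexPrefix n k (LTs n k (Icc 1 r)) := by
  refine ⟨filter_subset _ _, ?_⟩
  intro A hA B hB ⟨m, hm, hmin⟩
  simp only [LTs, mem_filter, not_disjoint_iff] at hA ⊢
  obtain ⟨hA, a, haA, har⟩ := hA
  refine ⟨hB, ?_⟩
  by_cases haB : a ∈ B
  · exact ⟨a, haB, har⟩
  · have h1 := hmin a (mem_union_right _ (mem_sdiff.2 ⟨haA, haB⟩))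
    have h2 := (mem_sdiff.1 hm).1
    have h3 := mem_Icc.1 ((mem_powersetCard.1 hB).1 h2)
    exact ⟨m, h2, mem_Icc.2 ⟨h3.1, h1.trans (mem_Icc.1 har).2⟩⟩

/-- **Corollary.** If `F` has size `∑_{i=1}^{r} C(n−i,k−1)` and maximizes the total
intersection among all families of the same size, then up to a permutation of `[n]`,
`F = L_{n,k,1}^{(r)}`. -/
theorem stmt3 (k r n : ℕ) (hk : 2 ≤ k) (hr : 1 ≤ r)
    (hn : 3000 * (r + 1) ^ 3 * (k + r) * k ^ 2 ≤ n)
    (F : Finset (Finset ℕ)) (hF : F ⊆ (Icc 1 n).powersetCard k)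
    (hcard : F.card = ∑ i ∈ Icc 1 r, (n - i).choose (k - 1))
    (hopt : ∀ G ⊆ (Icc 1 n).powersetCard k, G.card = F.card → totalInt G ≤ totalInt F) :
    ∃ σ : Equiv.Perm ℕ, (∀ x ∈ Icc 1 n, σ x ∈ Icc 1 n) ∧
      ∃ L : Finset (Finset ℕ), IsLexPrefix n k L ∧ L.card = lexStarCard n k 1 r ∧
        (F.image fun A => A.image fun x => σ x) = L := by
  have hn3 : 3000 * (k ^ 2 * r ^ 2) * k ≤ n := by
    refine le_trans ?_ hn
    calc 3000 * (k ^ 2 * r ^ 2) * k = 3000 * r ^ 2 * k * k ^ 2 := by ring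
      _ ≤ 3000 * (r + 1) ^ 3 * (k + r) * k ^ 2 := by
        gcongr ?_ * ?_ * _
        · gcongr 3000 * ?_
          calc r ^ 2 ≤ (r + 1) ^ 2 := by gcongr; omega
            _ ≤ (r + 1) ^ 3 := by gcongr <;> omega
        · omega
  have hk2 : 1 ≤ k ^ 2 := Nat.one_le_pow _ _ (by omega)
  have hr2 : 1 ≤ r ^ 2 := Nat.one_le_pow _ _ hr
  have hrr : r ≤ r ^ 2 := Nat.le_self_pow (by norm_num) _
  have hkn : k ≤ n := by nlinarith [Nat.mul_le_mul hk2 hr2]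
  have hrn : r ≤ n := by
    have : 1 * r ^ 2 ≤ k ^ 2 * r ^ 2 := Nat.mul_le_mul_right _ hk2
    nlinarith
  obtain ⟨T, hT, hTc, htop⟩ := exists_top n r hrn (dg F)
  have hsc := sum_choose n k r (by omega) hrn
  have hLc : ∀ U ⊆ Icc 1 n, U.card = r → (LTs n k U).card = F.card := by
    intro U hU hUc
    rw [LTs_card n k U hU, hUc, hcard]; omega
  have hD : 3000 * (k ^ 2 * r ^ 2) * (n - 2).choose (k - 2) ≤ (n - 1).choose (k - 1) := by
    obtain ⟨j, rfl⟩ : ∃ j, k = j + 2 := ⟨k - 2, by omega⟩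
    obtain ⟨m, rfl⟩ : ∃ m, n = m + 2 := ⟨n - 2, by omega⟩
    have h1 := Nat.add_one_mul_choose_eq m j
    have h2 : m.choose j ≤ (m + 1).choose (j + 1) := by rw [Nat.choose_succ_succ]; omega
    show 3000 * ((j + 2) ^ 2 * r ^ 2) * m.choose j ≤ (m + 1).choose (j + 1)
    have h3 := Nat.mul_le_mul_right (m.choose j) hn3
    have h4 : (j + 2) * (3000 * ((j + 2) ^ 2 * r ^ 2) * m.choose j)
        ≤ (j + 2) * (m + 1).choose (j + 1) := by nlinarith
    exact Nat.le_of_mul_le_mul_left h4 (by omega)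
  have hu : F.card ≤ r * (n - 1).choose (k - 1) := by
    rw [hcard]
    have := sum_le_card_nsmul (Icc 1 r) (fun i => (n - i).choose (k - 1)) ((n - 1).choose (k - 1))
      (fun i hi => Nat.choose_le_choose _ (by have := (mem_Icc.1 hi).1; omega))
    simpa using this
  have hFL := key n k r hk hr _ _ rfl rfl hD (Nat.choose_pos (by omega)) F hF hu T hT hTc htop
    (hLc T hT hTc) (hopt _ (filter_subset _ _) (hLc T hT hTc))
  obtain ⟨σ, hσ, hσT⟩ := exists_perm n r hrn T hT hTc
  have hrc := hLc (Icc 1 r) (Icc_subset_Icc le_rfl hrn) (by simp)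
  refine ⟨σ, hσ, LTs n k (Icc 1 r), LTs_prefix n k r, ?_, ?_⟩
  · rw [hrc, hcard, lexStarCard]
    have e1 : n - 1 + 1 = n := by omega
    have e2 : k - 1 + 1 = k := by omega
    have e3 : 1 + r - 1 = r := by omega
    rw [e1, e2, e3]; omega
  · apply eq_of_subset_of_card_le
    · intro B hB
      obtain ⟨A, hA, rfl⟩ := mem_image.1 hB
      rw [hFL] at hA
      simp only [LTs, mem_filter, mem_powersetCard, not_disjoint_iff] at hA ⊢
      obtain ⟨⟨h1, h2⟩, t, h3, h4⟩ := hA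
      refine ⟨⟨?_, ?_⟩, σ t, mem_image_of_mem _ h3, hσT t h4⟩
      · intro y hy
        obtain ⟨x, hx, rfl⟩ := mem_image.1 hy
        exact hσ x (h1 hx)
      · rw [card_image_of_injective _ σ.injective, h2]
    · rw [hrc, card_image_of_injective]
      exact image_injective σ.injective
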